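/- arXiv:1709.05031 — 2 statements merged into one kernel-verified Lean document; each statement's English description precedes it below -/
import Mathlib

section
/- Let B ≥ 0 and c ∈ ℝ satisfy B > 0, or B = 0 and c > 0. Set Z = √(4B + c²) and let x₀ ∈ (0, π/√2] be the least positive solution of cos(√2·x₀) = −c/Z. Define φ(x) = √(c + Z·cos(√2·x)). Then: (i) c + Z·cos(√2·x) > 0 for all x ∈ (−x₀, x₀), so φ is positive and smooth there; (ii) φ(x) → 0 as x → ±x₀; (iii) −c·φ(x) + φ(x)·(φ(x)·φ'(x))' + φ(x)³ = 0 for all x ∈ (−x₀, x₀); (iv) (φ(x)·φ'(x))² = 2B + c·φ(x)² − (1/2)·φ(x)⁴ for all x ∈ (−x₀, x₀). -/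
open Filter Set

/-!
The substitution `u = φ²` linearises the problem. Where `u > 0` we have `φ φ' = u' / 2`, so the
profile equation becomes `u'' = 2 (c - u)` and the first integral becomes
`u' ^ 2 = 4 (2 B + c u - u² / 2)`. Both hold for a sinusoid of mean `c` and frequency `√2`, the
second one when its amplitude `Z` satisfies `Z² = 4 B + c²`. The compacton is the square
root of one positive hump of this sinusoid.
-/

section SqrtProfile

variable {u : ℝ → ℝ} {x : ℝ}

theorem sqrt_mul_deriv_sqrt (hu : DifferentiableAt ℝ u x) (hpos : 0 < u x) :
    √(u x) * deriv (fun y => √(u y)) x = deriv u x / 2 := by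
  have hsqrt : √(u x) ≠ 0 := (Real.sqrt_pos.mpr hpos).ne'
  rw [deriv_sqrt hu hpos.ne']
  field_simp

theorem deriv_sqrt_mul_deriv_sqrt (hu : ContDiffAt ℝ 1 u x) (hpos : 0 < u x) :
    deriv (fun y => √(u y) * deriv (fun z => √(u z)) y) x = deriv (deriv u) x / 2 := by
  have hlocal : (fun y => √(u y) * deriv (fun z => √(u z)) y) =ᶠ[nhds x]
      fun y => deriv u y / 2 := by
    filter_upwards [hu.eventually (by simp), hu.continuousAt.eventually_const_lt hpos]
      with y hy hypos
    exact sqrt_mul_deriv_sqrt (hy.differentiableAt one_ne_zero) hypos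
  rw [hlocal.deriv_eq, deriv_div_const]

theorem sqrt_profile_equation {c : ℝ} (hu : ContDiffAt ℝ 1 u x) (hpos : 0 < u x)
    (hode : deriv (deriv u) x = 2 * (c - u x)) :
    -c * √(u x) + √(u x) * deriv (fun y => √(u y) * deriv (fun z => √(u z)) y) x
      + √(u x) ^ 3 = 0 := by
  rw [deriv_sqrt_mul_deriv_sqrt hu hpos, hode]
  linear_combination √(u x) * Real.sq_sqrt hpos.le

theorem sqrt_first_integral {B c : ℝ} (hu : DifferentiableAt ℝ u x) (hpos : 0 < u x)
    (hint : deriv u x ^ 2 = 4 * (2 * B + c * u x - u x ^ 2 / 2)) :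
    (√(u x) * deriv (fun y => √(u y)) x) ^ 2 =
      2 * B + c * √(u x) ^ 2 - (1 / 2) * √(u x) ^ 4 := by
  have hfourth : √(u x) ^ 4 = u x ^ 2 := by rw [pow_mul (√(u x)) 2 2, Real.sq_sqrt hpos.le]
  rw [sqrt_mul_deriv_sqrt hu hpos, hfourth, Real.sq_sqrt hpos.le]
  linear_combination hint / 4

end SqrtProfile

/-- The sinusoid with mean `c`, amplitude `Z` and frequency `ω`. The square of the compacton
profile is the case `ω = √2`. -/
noncomputable def cosineWave (c Z ω x : ℝ) : ℝ :=
  c + Z * Real.cos (ω * x)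

section CosineWave

variable (c Z ω : ℝ)

theorem cosineWave_neg (x : ℝ) : cosineWave c Z ω (-x) = cosineWave c Z ω x := by
  simp [cosineWave]

theorem contDiff_cosineWave {n : WithTop ℕ∞} : ContDiff ℝ n (cosineWave c Z ω) := by
  unfold cosineWave
  fun_prop

theorem deriv_cosineWave :
    deriv (cosineWave c Z ω) = fun x => -(Z * ω) * Real.sin (ω * x) := by
  ext x
  have hcos := (((hasDerivAt_id x).const_mul ω).cos.const_mul Z).const_add c
  exact hcos.deriv.trans (by simp only [id_eq]; ring)

theorem deriv_deriv_cosineWave (x : ℝ) :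
    deriv (deriv (cosineWave c Z ω)) x = ω ^ 2 * (c - cosineWave c Z ω x) := by
  have hsin := ((hasDerivAt_id x).const_mul ω).sin.const_mul (-(Z * ω))
  rw [deriv_cosineWave]
  exact hsin.deriv.trans (by simp only [id_eq, cosineWave]; ring)

theorem deriv_cosineWave_sq (x : ℝ) :
    deriv (cosineWave c Z ω) x ^ 2 = ω ^ 2 * (Z ^ 2 - (cosineWave c Z ω x - c) ^ 2) := by
  simp only [deriv_cosineWave, cosineWave]
  linear_combination (Z * ω) ^ 2 * Real.sin_sq_add_cos_sq (ω * x)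

variable {Z ω}

theorem cosineWave_lt_cosineWave_of_abs_lt {x y : ℝ} (hZ : 0 < Z) (hω : 0 < ω)
    (hxy : |x| < y) (hy : ω * y ≤ Real.pi) : cosineWave c Z ω y < cosineWave c Z ω x := by
  have hcos : Real.cos (ω * y) < Real.cos (ω * x) := by
    rw [← Real.cos_abs (ω * x), abs_mul, abs_of_pos hω]
    exact Real.cos_lt_cos_of_nonneg_of_le_pi (by positivity) hy (by gcongr)
  unfold cosineWave
  gcongr

end CosineWave

/-- the explicit compacton profile Φ_{B,c} of degenerate KdV with p = 4. -/
theorem stmt_4 (B c : ℝ) (hB : 0 ≤ B) (hcase : 0 < B ∨ (B = 0 ∧ 0 < c))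
    (Z : ℝ) (hZ : Z = Real.sqrt (4 * B + c ^ 2))
    (x₀ : ℝ) (hx₀pos : 0 < x₀) (hx₀le : x₀ ≤ Real.pi / Real.sqrt 2)
    (hx₀ : Real.cos (Real.sqrt 2 * x₀) = -c / Z)
    (hleast : ∀ y, 0 < y → Real.cos (Real.sqrt 2 * y) = -c / Z → x₀ ≤ y)
    (φ : ℝ → ℝ)
    (hφ : ∀ x, φ x = Real.sqrt (c + Z * Real.cos (Real.sqrt 2 * x))) :
    (∀ x ∈ Set.Ioo (-x₀) x₀, 0 < c + Z * Real.cos (Real.sqrt 2 * x)) ∧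
    ContDiffOn ℝ (⊤ : ℕ∞) φ (Set.Ioo (-x₀) x₀) ∧
    Tendsto φ (nhdsWithin x₀ (Set.Ioo (-x₀) x₀)) (nhds 0) ∧
    Tendsto φ (nhdsWithin (-x₀) (Set.Ioo (-x₀) x₀)) (nhds 0) ∧
    (∀ x ∈ Set.Ioo (-x₀) x₀,
      -c * φ x + φ x * deriv (fun y => φ y * deriv φ y) x + (φ x) ^ 3 = 0) ∧
    (∀ x ∈ Set.Ioo (-x₀) x₀,
      (φ x * deriv φ x) ^ 2 = 2 * B + c * (φ x) ^ 2 - (1 / 2) * (φ x) ^ 4) := by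
  obtain rfl : φ = fun x => √(cosineWave c Z √2 x) := funext hφ
  have hsq : 0 < 4 * B + c ^ 2 := by rcases hcase with h | ⟨rfl, h⟩ <;> positivity
  have hZpos : 0 < Z := hZ ▸ Real.sqrt_pos.mpr hsq
  have hZsq : Z ^ 2 = 4 * B + c ^ 2 := hZ ▸ Real.sq_sqrt hsq.le
  have hu {n : WithTop ℕ∞} : ContDiff ℝ n (cosineWave c Z √2) := contDiff_cosineWave c Z √2
  have hzero : cosineWave c Z √2 x₀ = 0 := by rw [cosineWave, hx₀]; field_simp; ring
  have hpos (x : ℝ) (hx : x ∈ Ioo (-x₀) x₀) : 0 < cosineWave c Z √2 x :=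
    hzero ▸ cosineWave_lt_cosineWave_of_abs_lt c hZpos (by positivity) (abs_lt.mpr hx)
      ((le_div_iff₀' (by positivity)).mp hx₀le)
  have hlim {a : ℝ} (ha : cosineWave c Z √2 a = 0) :
      Tendsto (fun x => √(cosineWave c Z √2 x)) (nhdsWithin a (Ioo (-x₀) x₀)) (nhds 0) := by
    simpa only [ContinuousWithinAt, ha, Real.sqrt_zero] using
      (hu (n := 0)).continuous.sqrt.continuousWithinAt (s := Ioo (-x₀) x₀) (x := a)
  refine ⟨hpos, hu.contDiffOn.sqrt fun x hx => (hpos x hx).ne', hlim hzero,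
    hlim (by rw [cosineWave_neg, hzero]),
    fun x hx => sqrt_profile_equation hu.contDiffAt (hpos x hx) ?_,
    fun x hx => sqrt_first_integral (hu.differentiable one_ne_zero x) (hpos x hx) ?_⟩
  · rw [deriv_deriv_cosineWave, Real.sq_sqrt zero_le_two]
  · rw [deriv_cosineWave_sq, Real.sq_sqrt zero_le_two, hZsq]
    ring
end

section
/- Let c < 1 and B > 0, set r = √(2B)/(1−c), and let Φ(x) = √((c−1)x² + 2B/(1−c)) for |x| ≤ r and Φ(x) = 0 otherwise. Then M(Φ) = ∫Φ² dx = (4/3)·(2B)^{3/2}/(1−c)², and H(Φ) = (1/2)∫(ΦΦ')² dx − (1/2)∫Φ² dx = −((1+c)/4)·M(Φ) = −(2B)^{3/2}·(1+c)/(3(1−c)²). -/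
open MeasureTheory

/-!
Since `Real.sqrt` vanishes on negative numbers, the compacton is globally `√f` for the concave
parabola `f x = (1 - c) * (r ^ 2 - x ^ 2)`, and `√f * (√f)' = f' / 2` wherever `f > 0`, whereas
`√f = 0` elsewhere. Both integrands, `(√f) ^ 2` and `(√f * (√f)') ^ 2`, are therefore polynomials
cut off to the interval `(-r, r)`; the singular slope of `√f` at `±r` plays no role.
-/

/-- The mass `M(u)` of a real function on the line. -/
noncomputable def mass (u : ℝ → ℝ) : ℝ := ∫ x, u x ^ 2

/-- The Hamiltonian `H(u)` of the degenerate KdV equation with `p = 2`, the derivative of `u` being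
the classical one (with value `0` where `u` is not differentiable). -/
noncomputable def hamiltonian (u : ℝ → ℝ) : ℝ :=
  (1 / 2) * (∫ x, (u x * deriv u x) ^ 2) - (1 / 2) * mass u

/-- The compacton profile of speed parameter `c` and half-width `r`. No cutoff is written: for
`c < 1` the radicand is negative when `r < |x|`, and there the square root is `0`. The profile
`Φ_{B,c}` has `r = √(2 * B) / (1 - c)`. -/
noncomputable def compacton (c r x : ℝ) : ℝ := √((1 - c) * (r ^ 2 - x ^ 2))

section SqrtProfile

open Set Real

variable {f f' : ℝ → ℝ}

theorem mass_sqrt (hf : Measurable f) :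
    mass (fun x ↦ √(f x)) = ∫ x in {x | 0 < f x}, f x := by
  rw [mass, ← integral_indicator (measurableSet_lt measurable_const hf)]
  congr 1 with x
  simp only [indicator_apply, mem_ofPred_eq]
  split_ifs with hx
  · rw [sq_sqrt hx.le]
  · rw [sqrt_eq_zero_of_nonpos (not_lt.mp hx), zero_pow two_ne_zero]

theorem sqrt_mul_deriv_sqrt_s11 {a x : ℝ} (hf : HasDerivAt f a x) (hx : 0 < f x) :
    √(f x) * deriv (fun y ↦ √(f y)) x = a / 2 := by
  have hsqrt : √(f x) ≠ 0 := (sqrt_pos.mpr hx).ne'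
  rw [(hf.sqrt hx.ne').deriv]
  field_simp

theorem integral_sq_sqrt_mul_deriv_sqrt (hf : Measurable f)
    (hf' : ∀ x, 0 < f x → HasDerivAt f (f' x) x) :
    ∫ x, (√(f x) * deriv (fun y ↦ √(f y)) x) ^ 2 = ∫ x in {x | 0 < f x}, (f' x / 2) ^ 2 := by
  rw [← integral_indicator (measurableSet_lt measurable_const hf)]
  congr 1 with x
  simp only [indicator_apply, mem_ofPred_eq]
  split_ifs with hx
  · rw [sqrt_mul_deriv_sqrt_s11 (hf' x hx) hx]
  · rw [sqrt_eq_zero_of_nonpos (not_lt.mp hx), zero_mul, zero_pow two_ne_zero]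

end SqrtProfile

section Compacton

open Set Real

theorem setOf_mul_sq_sub_sq_pos {k r : ℝ} (hk : 0 < k) (hr : 0 ≤ r) :
    {x : ℝ | 0 < k * (r ^ 2 - x ^ 2)} = Ioo (-r) r := by
  ext x
  rw [mem_ofPred_eq, mul_pos_iff_of_pos_left hk, sub_pos, sq_lt_sq, abs_of_nonneg hr, abs_lt,
    mem_Ioo]

theorem setIntegral_Ioo_eq_intervalIntegral {E : Type*} [NormedAddCommGroup E] [NormedSpace ℝ E]
    {a b : ℝ} (f : ℝ → E) (hab : a ≤ b) : ∫ x in Ioo a b, f x = ∫ x in a..b, f x := by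
  rw [intervalIntegral.integral_of_le hab, integral_Ioc_eq_integral_Ioo]

variable {c r : ℝ}

theorem mass_compacton (hc : c < 1) (hr : 0 ≤ r) :
    mass (compacton c r) = 4 / 3 * (1 - c) * r ^ 3 := by
  calc mass (compacton c r)
      = ∫ x in {x | 0 < (1 - c) * (r ^ 2 - x ^ 2)}, (1 - c) * (r ^ 2 - x ^ 2) :=
        mass_sqrt (by fun_prop)
    _ = ∫ x in -r..r, (1 - c) * (r ^ 2 - x ^ 2) := by
        rw [setOf_mul_sq_sub_sq_pos (sub_pos.mpr hc) hr,
          setIntegral_Ioo_eq_intervalIntegral _ (neg_le_self hr)]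
    _ = 4 / 3 * (1 - c) * r ^ 3 := by
        rw [intervalIntegral.integral_const_mul, intervalIntegral.integral_sub (by simp) (by simp),
          intervalIntegral.integral_const, integral_pow, smul_eq_mul]
        ring

theorem integral_sq_compacton_mul_deriv (hc : c < 1) (hr : 0 ≤ r) :
    ∫ x, (compacton c r x * deriv (compacton c r) x) ^ 2 = 2 / 3 * (1 - c) ^ 2 * r ^ 3 := by
  have hderiv (x : ℝ) :
      HasDerivAt (fun y ↦ (1 - c) * (r ^ 2 - y ^ 2)) ((1 - c) * -(2 * x)) x := by
    simpa using ((hasDerivAt_pow 2 x).const_sub (r ^ 2)).const_mul (1 - c)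
  calc ∫ x, (compacton c r x * deriv (compacton c r) x) ^ 2
      = ∫ x in {x | 0 < (1 - c) * (r ^ 2 - x ^ 2)}, ((1 - c) * -(2 * x) / 2) ^ 2 :=
        integral_sq_sqrt_mul_deriv_sqrt (by fun_prop) fun x _ ↦ hderiv x
    _ = ∫ x in -r..r, (1 - c) ^ 2 * x ^ 2 := by
        rw [setOf_mul_sq_sub_sq_pos (sub_pos.mpr hc) hr,
          setIntegral_Ioo_eq_intervalIntegral _ (neg_le_self hr)]
        congr 1 with x
        ring
    _ = 2 / 3 * (1 - c) ^ 2 * r ^ 3 := by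
        rw [intervalIntegral.integral_const_mul, integral_pow]
        ring

theorem hamiltonian_compacton (hc : c < 1) (hr : 0 ≤ r) :
    hamiltonian (compacton c r) = -((1 + c) / 4) * mass (compacton c r) := by
  rw [hamiltonian, integral_sq_compacton_mul_deriv hc hr, mass_compacton hc hr]
  ring

theorem compacton_eq_ite {B : ℝ} (hc : c < 1) (hB : 0 ≤ B) (hr : r = √(2 * B) / (1 - c)) (x : ℝ) :
    compacton c r x = if |x| ≤ r then √((c - 1) * x ^ 2 + 2 * B / (1 - c)) else 0 := by
  have hc' : 0 < 1 - c := sub_pos.mpr hc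
  have hr_sq : r ^ 2 = 2 * B / (1 - c) ^ 2 := by
    rw [hr, div_pow, sq_sqrt (by positivity)]
  rw [compacton]
  split_ifs with hx
  · congr 1
    rw [hr_sq]
    field_simp
    ring
  · have hr_nonneg : 0 ≤ r := hr ▸ by positivity
    have hx_sq : r ^ 2 ≤ x ^ 2 :=
      sq_le_sq.mpr ((abs_of_nonneg hr_nonneg).trans_le (not_le.mp hx).le)
    exact sqrt_eq_zero_of_nonpos (mul_nonpos_of_nonneg_of_nonpos hc'.le (sub_nonpos.mpr hx_sq))

theorem mass_compacton_eq_rpow {B : ℝ} (hc : c < 1) (hB : 0 ≤ B) (hr : r = √(2 * B) / (1 - c)) :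
    mass (compacton c r) = (4 / 3) * (2 * B) ^ ((3 : ℝ) / 2) / (1 - c) ^ 2 := by
  have hc' : 0 < 1 - c := sub_pos.mpr hc
  have hpow : (2 * B) ^ ((3 : ℝ) / 2) = √(2 * B) ^ 3 := by
    rw [rpow_div_two_eq_sqrt _ (by positivity), rpow_ofNat]
  rw [mass_compacton hc (hr ▸ by positivity), hpow, hr]
  field_simp

end Compacton

/-- mass and Hamiltonian of the explicit p = 2 compacton Φ_{B,c}:
M(Φ) = (4/3)(2B)^{3/2}/(1−c)² and H(Φ) = −((1+c)/4)·M(Φ) = −(2B)^{3/2}(1+c)/(3(1−c)²). -/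
theorem stmt_11 (c B : ℝ) (hc : c < 1) (hB : 0 < B)
    (r : ℝ) (hr : r = Real.sqrt (2 * B) / (1 - c))
    (Φ : ℝ → ℝ)
    (hΦ : ∀ x, Φ x = if |x| ≤ r
      then Real.sqrt ((c - 1) * x ^ 2 + 2 * B / (1 - c)) else 0) :
    (∫ x, (Φ x) ^ 2) = (4 / 3) * (2 * B) ^ ((3 : ℝ) / 2) / (1 - c) ^ 2 ∧
    (1 / 2) * (∫ x, (Φ x * deriv Φ x) ^ 2) - (1 / 2) * (∫ x, (Φ x) ^ 2)
      = -((1 + c) / 4) * ((4 / 3) * (2 * B) ^ ((3 : ℝ) / 2) / (1 - c) ^ 2) ∧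
    (1 / 2) * (∫ x, (Φ x * deriv Φ x) ^ 2) - (1 / 2) * (∫ x, (Φ x) ^ 2)
      = -(2 * B) ^ ((3 : ℝ) / 2) * (1 + c) / (3 * (1 - c) ^ 2) := by
  obtain rfl : Φ = compacton c r :=
    funext fun x ↦ (hΦ x).trans (compacton_eq_ite hc hB.le hr x).symm
  have hr_nonneg : 0 ≤ r := hr ▸ div_nonneg (Real.sqrt_nonneg _) (sub_pos.mpr hc).le
  have hM := mass_compacton_eq_rpow hc hB.le hr
  have hH := hamiltonian_compacton hc hr_nonneg
  rw [hM] at hH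
  refine ⟨hM, hH, hH.trans ?_⟩
  field_simp
end
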